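/- arXiv:2206.01686 — 2 statements merged into one kernel-verified Lean document; each statement's English description precedes it below -/
import Mathlib

section
/- Covariance expansion for the Mandelbrot–van Ness kernel (Lemma 3.1). Let H ∈ (0,1), H ≠ 1/2, and let K_H(t,s) := (t − s)_+^{H − 1/2} − (−s)_+^{H − 1/2}. There exists a constant C_H depending only on H such that for all 0 ≤ v < s ≤ t with t − s ≤ s − v: | ∫_v^s K_H(s,r) K_H(t,r) dr − ( (1/(2H)) (s − v)^{2H} + (1/2)(s − v)^{2H − 1}(t − s) − (c_H/2)(t − s)^{2H} ) | ≤ C_H (s − v)^{2H − 2}(t − s)^2, where c_H := ((3/2 − H)/(2H)) · ∫_0^1 u^{(2 − 2H) − 1}(1 − u)^{(H + 1/2) − 1} du. -/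
open MeasureTheory intervalIntegral

/-- The Mandelbrot–van Ness kernel `K_H(t,s) = (t − s)_+^{H − 1/2} − (−s)_+^{H − 1/2}`. -/
noncomputable def mvnKernel (H t s : ℝ) : ℝ :=
  max (t - s) 0 ^ (H - 1 / 2) - max (-s) 0 ^ (H - 1 / 2)

/-- The fractional Brownian variance constant
`c_H = ((3/2 − H)/(2H)) · B(2 − 2H, H + 1/2)`. -/
noncomputable def fbmConst (H : ℝ) : ℝ :=
  ((3 / 2 - H) / (2 * H)) * ∫ u in (0:ℝ)..1, u ^ ((2 - 2 * H) - 1) * (1 - u) ^ ((H + 1 / 2) - 1)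

/-! Put `a = H - 1/2`, `L = s - v`, `h = t - s`. Since `0 ≤ v`, the substitution `r = s - x` turns
the covariance into `∫₀ᴸ x^a (x + h)^a dx`. Integrating the derivative of `x^(a+1) (x + h)^b` for
`b = a` and `b = a - 1` expresses it through two boundary terms at `L` and
`h² ∫₀ᴸ x^a (x + h)^(a-2) dx`. The boundary terms are Taylor expanded in `h`. The remaining
integrand is at most `x^(2a-2)`, so extending the integral to `∞` costs `O(L^(2a-1))`, and the
complete integral is `h^(2a-1) B(1 - 2a, a + 1)` by the substitution `u = h / (x + h)`. -/

section PowerIncrements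

variable {p x h : ℝ}

lemma abs_add_rpow_sub_rpow_le (hp : p ≤ 1) (hx : 0 < x) (hh : 0 ≤ h) :
    |(x + h) ^ p - x ^ p| ≤ |p| * x ^ (p - 1) * h := by
  have hderiv : ∀ y ∈ Set.Icc x (x + h),
      HasDerivWithinAt (fun y => y ^ p) (p * y ^ (p - 1)) (Set.Icc x (x + h)) y := fun y hy =>
    (Real.hasDerivAt_rpow_const (Or.inl (hx.trans_le hy.1).ne')).hasDerivWithinAt
  have hbound : ∀ y ∈ Set.Ico x (x + h), ‖p * y ^ (p - 1)‖ ≤ |p| * x ^ (p - 1) := by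
    intro y hy
    rw [Real.norm_eq_abs, abs_mul, abs_of_pos (Real.rpow_pos_of_pos (hx.trans_le hy.1) _)]
    exact mul_le_mul_of_nonneg_left (Real.rpow_le_rpow_of_nonpos hx hy.1 (by linarith))
      (abs_nonneg p)
  simpa using norm_image_sub_le_of_norm_deriv_le_segment' hderiv hbound (x + h)
    (Set.right_mem_Icc.2 (by linarith))

lemma abs_add_rpow_sub_rpow_sub_linear_le (hp : p ≤ 2) (hx : 0 < x) (hh : 0 ≤ h) :
    |(x + h) ^ p - x ^ p - p * x ^ (p - 1) * h| ≤ |p * (p - 1)| * x ^ (p - 2) * h ^ 2 := by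
  have hderiv : ∀ y ∈ Set.Icc x (x + h),
      HasDerivWithinAt (fun y => y ^ p - p * x ^ (p - 1) * y)
        (p * y ^ (p - 1) - p * x ^ (p - 1) * 1) (Set.Icc x (x + h)) y := fun y hy =>
    ((Real.hasDerivAt_rpow_const (Or.inl (hx.trans_le hy.1).ne')).sub
      ((hasDerivAt_id y).const_mul _)).hasDerivWithinAt
  have hbound : ∀ y ∈ Set.Ico x (x + h),
      ‖p * y ^ (p - 1) - p * x ^ (p - 1) * 1‖ ≤ |p * (p - 1)| * x ^ (p - 2) * h := by
    intro y hy
    have hincr := abs_add_rpow_sub_rpow_le (p := p - 1) (by linarith) hx (sub_nonneg.2 hy.1)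
    rw [add_sub_cancel, show p - 1 - 1 = p - 2 by ring] at hincr
    calc ‖p * y ^ (p - 1) - p * x ^ (p - 1) * 1‖ = |p| * |y ^ (p - 1) - x ^ (p - 1)| := by
          rw [Real.norm_eq_abs, ← abs_mul]; ring_nf
      _ ≤ |p| * (|p - 1| * x ^ (p - 2) * (y - x)) := by gcongr
      _ ≤ |p| * (|p - 1| * x ^ (p - 2) * h) := by gcongr; linarith [hy.2]
      _ = |p * (p - 1)| * x ^ (p - 2) * h := by rw [abs_mul]; ring
  have hmvt := norm_image_sub_le_of_norm_deriv_le_segment' hderiv hbound (x + h)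
    (Set.right_mem_Icc.2 (by linarith))
  rw [Real.norm_eq_abs] at hmvt
  convert hmvt using 1
  · ring_nf
  · ring

end PowerIncrements

section IntegralRpowMulAddRpow

variable {a b h L : ℝ}

lemma intervalIntegrable_rpow_mul_add_rpow (ha : -1 < a) (hh : 0 < h) (hL : 0 ≤ L) :
    IntervalIntegrable (fun x : ℝ => x ^ a * (x + h) ^ b) volume 0 L := by
  refine (intervalIntegrable_rpow' ha).mul_continuousOn
    (ContinuousOn.rpow_const (by fun_prop) fun x hx => Or.inl ?_)
  rw [Set.uIcc_of_le hL] at hx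
  linarith [hx.1]

lemma integral_rpow_mul_add_rpow_reduction (ha : -1 < a) (hh : 0 < h) (hL : 0 ≤ L) :
    (a + b + 1) * ∫ x in (0 : ℝ)..L, x ^ a * (x + h) ^ b
      = L ^ (a + 1) * (L + h) ^ b + b * h * ∫ x in (0 : ℝ)..L, x ^ a * (x + h) ^ (b - 1) := by
  have hcont : ContinuousOn (fun x : ℝ => x ^ (a + 1) * (x + h) ^ b) (Set.Icc 0 L) :=
    (ContinuousOn.rpow_const (by fun_prop) fun x _ => Or.inr (by linarith)).mul
      (ContinuousOn.rpow_const (by fun_prop) fun x hx => Or.inl (by linarith [hx.1]))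
  have hderiv : ∀ x ∈ Set.Ioo 0 L, HasDerivAt (fun x : ℝ => x ^ (a + 1) * (x + h) ^ b)
      ((a + b + 1) * (x ^ a * (x + h) ^ b) - b * h * (x ^ a * (x + h) ^ (b - 1))) x := by
    intro x hx
    have hx0 : x ≠ 0 := hx.1.ne'
    have hxh : x + h ≠ 0 := by linarith [hx.1]
    have hprod := (Real.hasDerivAt_rpow_const (p := a + 1) (Or.inl hx0)).mul
      (((hasDerivAt_id x).add_const h).rpow_const (p := b) (Or.inl hxh))
    refine hprod.congr_deriv ?_
    simp only [id_eq]
    rw [add_sub_cancel_right, Real.rpow_add_one hx0, Real.rpow_sub_one hxh]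
    field_simp
    ring
  have hint : ∀ b : ℝ, IntervalIntegrable (fun x : ℝ => x ^ a * (x + h) ^ b) volume 0 L := fun _ =>
    intervalIntegrable_rpow_mul_add_rpow ha hh hL
  have hftc := integral_eq_sub_of_hasDerivAt_of_le hL hcont hderiv
    (((hint b).const_mul _).sub ((hint (b - 1)).const_mul _))
  rw [integral_sub ((hint b).const_mul _) ((hint (b - 1)).const_mul _),
    intervalIntegral.integral_const_mul, intervalIntegral.integral_const_mul,
    Real.zero_rpow (by linarith), zero_mul, sub_zero] at hftc
  linarith

lemma integral_rpow_mul_add_rpow_self (ha : -1 < a) (hh : 0 < h) (hL : 0 ≤ L) :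
    (2 * a + 1) * ∫ x in (0 : ℝ)..L, x ^ a * (x + h) ^ a
      = L ^ (a + 1) * (L + h) ^ a + h / 2 * (L ^ (a + 1) * (L + h) ^ (a - 1))
        - (1 - a) / 2 * h ^ 2 * ∫ x in (0 : ℝ)..L, x ^ a * (x + h) ^ (a - 2) := by
  have hred := integral_rpow_mul_add_rpow_reduction (b := a) ha hh hL
  have hred' := integral_rpow_mul_add_rpow_reduction (b := a - 1) ha hh hL
  rw [show a - 1 - 1 = a - 2 by ring] at hred'
  linear_combination hred + h / 2 * hred'

lemma image_div_add_Ioi (hh : 0 < h) : (fun x => h / (x + h)) '' Set.Ioi 0 = Set.Ioo 0 1 := by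
  ext u
  constructor
  · rintro ⟨x, hx : 0 < x, rfl⟩
    exact ⟨by positivity, (div_lt_one (by positivity)).2 (by linarith)⟩
  · rintro ⟨hu0, hu1⟩
    refine ⟨h / u - h, sub_pos.2 ((lt_div_iff₀ hu0).2 (by nlinarith)), ?_⟩
    simp only [sub_add_cancel]
    field_simp

lemma integral_Ioi_rpow_mul_add_rpow (hh : 0 < h) :
    ∫ x in Set.Ioi (0 : ℝ), x ^ a * (x + h) ^ b
      = h ^ (a + b + 1) * ∫ u in (0 : ℝ)..1, u ^ (-a - b - 2) * (1 - u) ^ a := by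
  have hderiv : ∀ x ∈ Set.Ioi (0 : ℝ),
      HasDerivWithinAt (fun x => h / (x + h)) (-h / (x + h) ^ 2) (Set.Ioi 0) x := by
    intro x (hx : 0 < x)
    have hdiv := (hasDerivAt_const x h).div ((hasDerivAt_id x).add_const h)
      (show id x + h ≠ 0 by simp only [id_eq]; positivity)
    exact (hdiv.congr_deriv (by simp)).hasDerivWithinAt
  have hinj : Set.InjOn (fun x => h / (x + h)) (Set.Ioi 0) := by
    intro x _ y _ hxy
    simpa [div_eq_mul_inv, hh.ne'] using hxy
  rw [integral_of_le zero_le_one, integral_Ioc_eq_integral_Ioo, ← image_div_add_Ioi hh,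
    integral_image_eq_integral_abs_deriv_smul measurableSet_Ioi hderiv hinj,
    ← MeasureTheory.integral_const_mul]
  refine setIntegral_congr_fun measurableSet_Ioi fun x (hx : 0 < x) => ?_
  have hxh : 0 < x + h := by positivity
  have hcompl : 1 - h / (x + h) = x / (x + h) := by field_simp; ring
  simp only [smul_eq_mul, hcompl]
  rw [neg_div, abs_neg, abs_of_pos (by positivity), Real.div_rpow hh.le hxh.le,
    Real.div_rpow hx.le hxh.le, show -a - b - 2 = -(a + b + 1) - 1 by ring,
    Real.rpow_sub_one hh.ne', Real.rpow_sub_one hxh.ne', Real.rpow_neg hh.le,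
    Real.rpow_neg hxh.le, Real.rpow_add_one hxh.ne', Real.rpow_add hxh]
  field_simp

lemma rpow_mul_add_rpow_le {x : ℝ} (hb : b ≤ 0) (hh : 0 ≤ h) (hx : 0 < x) :
    x ^ a * (x + h) ^ b ≤ x ^ (a + b) := by
  rw [Real.rpow_add hx]
  exact mul_le_mul_of_nonneg_left (Real.rpow_le_rpow_of_nonpos hx (by linarith) hb) (by positivity)

lemma integrableOn_Ioi_rpow_mul_add_rpow (hab : a + b < -1) (hb : b ≤ 0) (hh : 0 ≤ h)
    (hL : 0 < L) : IntegrableOn (fun x : ℝ => x ^ a * (x + h) ^ b) (Set.Ioi L) := by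
  refine (integrableOn_Ioi_rpow_of_lt hab hL).mono' (by fun_prop) ?_
  filter_upwards [ae_restrict_mem measurableSet_Ioi] with x (hx : L < x)
  have hx0 : 0 < x := hL.trans hx
  rw [Real.norm_of_nonneg (by positivity)]
  exact rpow_mul_add_rpow_le hb hh hx0

lemma integral_Ioi_rpow_mul_add_rpow_le (hab : a + b < -1) (hb : b ≤ 0) (hh : 0 ≤ h)
    (hL : 0 < L) :
    ∫ x in Set.Ioi L, x ^ a * (x + h) ^ b ≤ -L ^ (a + b + 1) / (a + b + 1) := by
  rw [← integral_Ioi_rpow_of_lt hab hL]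
  exact setIntegral_mono_on (integrableOn_Ioi_rpow_mul_add_rpow hab hb hh hL)
    (integrableOn_Ioi_rpow_of_lt hab hL) measurableSet_Ioi
    fun x (hx : L < x) => rpow_mul_add_rpow_le hb hh (hL.trans hx)

lemma abs_beta_sub_integral_rpow_mul_add_rpow_le (ha : -1 < a) (hab : a + b < -1)
    (hb : b ≤ 0) (hh : 0 < h) (hL : 0 < L) :
    |h ^ (a + b + 1) * (∫ u in (0 : ℝ)..1, u ^ (-a - b - 2) * (1 - u) ^ a)
        - ∫ x in (0 : ℝ)..L, x ^ a * (x + h) ^ b|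
      ≤ -L ^ (a + b + 1) / (a + b + 1) := by
  rw [← integral_Ioi_rpow_mul_add_rpow hh, ← integral_interval_add_Ioi'
    (intervalIntegrable_rpow_mul_add_rpow ha hh hL.le)
    (integrableOn_Ioi_rpow_mul_add_rpow hab hb hh.le hL), add_sub_cancel_left, abs_of_nonneg]
  · exact integral_Ioi_rpow_mul_add_rpow_le hab hb hh.le hL
  · refine setIntegral_nonneg measurableSet_Ioi fun x (hx : L < x) => ?_
    have hx0 : 0 < x := hL.trans hx
    positivity

lemma abs_rpow_mul_add_rpow_boundary_sub_le (ha : a ≤ 2) (hh : 0 ≤ h) (hL : 0 < L) :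
    |L ^ (a + 1) * (L + h) ^ a + h / 2 * (L ^ (a + 1) * (L + h) ^ (a - 1))
        - (L ^ (2 * a + 1) + (2 * a + 1) / 2 * L ^ (2 * a) * h)|
      ≤ |a - 1| * (|a| + 1 / 2) * (L ^ (2 * a - 1) * h ^ 2) := by
  have hquad := abs_add_rpow_sub_rpow_sub_linear_le ha hL hh
  have hlin := abs_add_rpow_sub_rpow_le (p := a - 1) (by linarith) hL hh
  rw [show a - 1 - 1 = a - 2 by ring] at hlin
  have hpow0 : L ^ (2 * a + 1) = L ^ (a + 1) * L ^ a := by rw [← Real.rpow_add hL]; ring_nf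
  have hpow1 : L ^ (2 * a) = L ^ (a + 1) * L ^ (a - 1) := by rw [← Real.rpow_add hL]; ring_nf
  have hpow2 : L ^ (2 * a - 1) = L ^ (a + 1) * L ^ (a - 2) := by rw [← Real.rpow_add hL]; ring_nf
  rw [hpow0, hpow1, hpow2]
  calc _ = |L ^ (a + 1) * ((L + h) ^ a - L ^ a - a * L ^ (a - 1) * h)
          + h / 2 * L ^ (a + 1) * ((L + h) ^ (a - 1) - L ^ (a - 1))| := by ring_nf
    _ ≤ L ^ (a + 1) * |(L + h) ^ a - L ^ a - a * L ^ (a - 1) * h|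
          + h / 2 * L ^ (a + 1) * |(L + h) ^ (a - 1) - L ^ (a - 1)| := by
        refine (abs_add_le _ _).trans_eq ?_
        rw [abs_mul, abs_mul, abs_of_pos (by positivity : 0 < L ^ (a + 1)),
          abs_of_nonneg (by positivity : 0 ≤ h / 2 * L ^ (a + 1))]
    _ ≤ L ^ (a + 1) * (|a * (a - 1)| * L ^ (a - 2) * h ^ 2)
          + h / 2 * L ^ (a + 1) * (|a - 1| * L ^ (a - 2) * h) := by gcongr
    _ = _ := by rw [abs_mul]; ring

lemma abs_integral_rpow_mul_add_rpow_self_sub_le (ha : -1 < a) (ha' : a < 1 / 2) (hh : 0 < h)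
    (hL : 0 < L) :
    |(2 * a + 1) * (∫ x in (0 : ℝ)..L, x ^ a * (x + h) ^ a)
        - (L ^ (2 * a + 1) + (2 * a + 1) / 2 * L ^ (2 * a) * h
          - (1 - a) / 2 * (∫ u in (0 : ℝ)..1, u ^ (-(2 * a)) * (1 - u) ^ a) * h ^ (2 * a + 1))|
      ≤ (1 - a) * (|a| + 1 / 2 + 1 / (2 * (1 - 2 * a))) * (L ^ (2 * a - 1) * h ^ 2) := by
  have hbdry := abs_rpow_mul_add_rpow_boundary_sub_le (a := a) (by linarith) hh.le hL
  rw [abs_of_nonpos (by linarith : a - 1 ≤ 0), neg_sub] at hbdry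
  have htail := abs_beta_sub_integral_rpow_mul_add_rpow_le (a := a) (b := a - 2)
    ha (by linarith) (by linarith) hh hL
  rw [show a + (a - 2) + 1 = 2 * a - 1 by ring, show -a - (a - 2) - 2 = -(2 * a) by ring] at htail
  have hpow : h ^ (2 * a + 1) = h ^ 2 * h ^ (2 * a - 1) := by
    rw [← Real.rpow_natCast, ← Real.rpow_add hh]; push_cast; ring_nf
  have hcoef : 0 ≤ (1 - a) / 2 * h ^ 2 := mul_nonneg (by linarith) (sq_nonneg h)
  rw [integral_rpow_mul_add_rpow_self ha hh hL.le, hpow]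
  set B := ∫ u in (0 : ℝ)..1, u ^ (-(2 * a)) * (1 - u) ^ a
  set J := ∫ x in (0 : ℝ)..L, x ^ a * (x + h) ^ (a - 2)
  set S := L ^ (a + 1) * (L + h) ^ a + h / 2 * (L ^ (a + 1) * (L + h) ^ (a - 1))
  set M := L ^ (2 * a + 1) + (2 * a + 1) / 2 * L ^ (2 * a) * h
  calc _ = |(S - M) + (1 - a) / 2 * h ^ 2 * (h ^ (2 * a - 1) * B - J)| := by ring_nf
    _ ≤ |S - M| + (1 - a) / 2 * h ^ 2 * |h ^ (2 * a - 1) * B - J| :=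
        (abs_add_le _ _).trans_eq (by rw [abs_mul _ (_ - J), abs_of_nonneg hcoef])
    _ ≤ (1 - a) * (|a| + 1 / 2) * (L ^ (2 * a - 1) * h ^ 2)
          + (1 - a) / 2 * h ^ 2 * (-L ^ (2 * a - 1) / (2 * a - 1)) := by gcongr
    _ = _ := by
        rw [← neg_sub 1 (2 * a), neg_div_neg_eq]
        field_simp [show 1 - 2 * a ≠ 0 by linarith]

lemma integral_rpow_mul_rpow_self (ha : -1 / 2 < a) (hL : 0 ≤ L) :
    ∫ x in (0 : ℝ)..L, x ^ a * x ^ a = L ^ (2 * a + 1) / (2 * a + 1) := by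
  have hpow : Set.EqOn (fun x : ℝ => x ^ a * x ^ a) (fun x => x ^ (2 * a)) (Set.Ioc 0 L) :=
    fun x hx => by simp only [← Real.rpow_add hx.1, two_mul]
  rw [integral_of_le hL, setIntegral_congr_fun measurableSet_Ioc hpow, ← integral_of_le hL,
    integral_rpow (Or.inl (by linarith)), Real.zero_rpow (by linarith), sub_zero]

end IntegralRpowMulAddRpow

lemma abs_integral_rpow_mul_add_rpow_sub_fbmConst_le {H h L : ℝ} (hH0 : 0 < H) (hH1 : H < 1)
    (hh : 0 ≤ h) (hL : 0 < L) :
    |(∫ x in (0 : ℝ)..L, x ^ (H - 1 / 2) * (x + h) ^ (H - 1 / 2))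
        - (1 / (2 * H) * L ^ (2 * H) + 1 / 2 * L ^ (2 * H - 1) * h
          - fbmConst H / 2 * h ^ (2 * H))|
      ≤ (3 / 2 - H) * (|H - 1 / 2| + 1 / 2 + 1 / (4 * (1 - H))) / (2 * H)
        * L ^ (2 * H - 2) * h ^ 2 := by
  rcases hh.eq_or_lt with rfl | hh
  · simp only [add_zero]
    rw [integral_rpow_mul_rpow_self (by linarith) hL.le, Real.zero_rpow (by linarith),
      show 2 * (H - 1 / 2) + 1 = 2 * H by ring]
    simp [div_eq_inv_mul]
  have hexp := abs_integral_rpow_mul_add_rpow_self_sub_le (a := H - 1 / 2)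
    (by linarith) (by linarith) hh hL
  rw [show 2 * (H - 1 / 2) + 1 = 2 * H by ring, show 2 * (H - 1 / 2) - 1 = 2 * H - 2 by ring,
    show 2 * (H - 1 / 2) = 2 * H - 1 by ring, show 2 * (1 - (2 * H - 1)) = 4 * (1 - H) by ring,
    show 1 - (H - 1 / 2) = 3 / 2 - H by ring] at hexp
  rw [fbmConst, show 2 - 2 * H - 1 = -(2 * H - 1) by ring,
    show H + 1 / 2 - 1 = H - 1 / 2 by ring]
  have h2H : 0 < 2 * H := by positivity
  refine le_of_mul_le_mul_left (le_of_eq_of_le ?_ (hexp.trans_eq ?_)) h2H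
  · rw [show ∀ z : ℝ, 2 * H * |z| = |2 * H * z| from fun z => by rw [abs_mul, abs_of_pos h2H]]
    congr 1
    field_simp
  · field_simp

lemma integral_mvnKernel_mul_mvnKernel {H v s t : ℝ} (hH : H ≠ 1 / 2) (hv : 0 ≤ v) (hvs : v ≤ s)
    (hst : s ≤ t) :
    ∫ r in v..s, mvnKernel H s r * mvnKernel H t r
      = ∫ x in (0 : ℝ)..(s - v), x ^ (H - 1 / 2) * (x + (t - s)) ^ (H - 1 / 2) := by
  have hreflect := integral_comp_sub_left (a := v) (b := s)
    (fun x : ℝ => x ^ (H - 1 / 2) * (x + (t - s)) ^ (H - 1 / 2)) s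
  rw [sub_self] at hreflect
  rw [← hreflect]
  refine integral_congr fun r hr => ?_
  rw [Set.uIcc_of_le hvs] at hr
  obtain ⟨hvr, hrs⟩ := hr
  simp only [mvnKernel]
  rw [max_eq_left (by linarith : 0 ≤ s - r), max_eq_left (by linarith : 0 ≤ t - r),
    max_eq_right (by linarith : -r ≤ 0), Real.zero_rpow (sub_ne_zero.mpr hH), sub_zero, sub_zero,
    show s - r + (t - s) = t - r by ring]

theorem mvnKernel_covariance_expansion_general
    (H : ℝ) (hH0 : 0 < H) (hH1 : H < 1) (hH : H ≠ 1 / 2) :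
    ∃ C : ℝ, 0 ≤ C ∧
    ∀ v s t : ℝ, 0 ≤ v → v < s → s ≤ t →
      |(∫ r in v..s, mvnKernel H s r * mvnKernel H t r)
          - ((1 / (2 * H)) * (s - v) ^ (2 * H)
            + (1 / 2) * (s - v) ^ (2 * H - 1) * (t - s)
            - (fbmConst H / 2) * (t - s) ^ (2 * H))|
        ≤ C * (s - v) ^ (2 * H - 2) * (t - s) ^ (2 : ℕ) := by
  have : 0 < 3 / 2 - H := by linarith
  have : 0 < 1 - H := by linarith
  refine ⟨(3 / 2 - H) * (|H - 1 / 2| + 1 / 2 + 1 / (4 * (1 - H))) / (2 * H), by positivity,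
    fun v s t hv hvs hst => ?_⟩
  rw [integral_mvnKernel_mul_mvnKernel hH hv hvs.le hst]
  exact abs_integral_rpow_mul_add_rpow_sub_fbmConst_le hH0 hH1 (sub_nonneg.2 hst) (sub_pos.2 hvs)

/-- **Covariance expansion for the Mandelbrot–van Ness kernel** (Lemma 3.1). For
`H ∈ (0,1)`, `H ≠ 1/2`, there is a constant `C_H` depending only on `H` such that for all
`0 ≤ v < s ≤ t` with `t − s ≤ s − v`:
`|∫_v^s K_H(s,r) K_H(t,r) dr − ((1/(2H))(s−v)^{2H} + (1/2)(s−v)^{2H−1}(t−s)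
  − (c_H/2)(t−s)^{2H})| ≤ C_H (s−v)^{2H−2}(t−s)^2`. -/
theorem mvnKernel_covariance_expansion
    (H : ℝ) (hH0 : 0 < H) (hH1 : H < 1) (hH : H ≠ 1 / 2) :
    ∃ C : ℝ, 0 ≤ C ∧
    ∀ v s t : ℝ, 0 ≤ v → v < s → s ≤ t → t - s ≤ s - v →
      |(∫ r in v..s, mvnKernel H s r * mvnKernel H t r)
          - ((1 / (2 * H)) * (s - v) ^ (2 * H)
            + (1 / 2) * (s - v) ^ (2 * H - 1) * (t - s)
            - (fbmConst H / 2) * (t - s) ^ (2 * H))|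
        ≤ C * (s - v) ^ (2 * H - 2) * (t - s) ^ (2 : ℕ) := by
  obtain ⟨C, hC, hbound⟩ := mvnKernel_covariance_expansion_general H hH0 hH1 hH
  exact ⟨C, hC, fun v s t hv hvs hst _ => hbound v s t hv hvs hst⟩
end

section
/- Improved derivative bounds for the Gaussian smoothing of a Hölder function (used in the proof of Proposition 3.3). Let d ∈ ℕ, γ ∈ (0,1), let γ_d denote the standard Gaussian measure on ℝ^d, let f : ℝ^d → ℝ^d be γ-Hölder continuous, and define F(m, σ) := ∫_{ℝ^d} f(m + σx) dγ_d(x) for m ∈ ℝ^d and σ > 0. Then there exists a constant C_{d,γ} depending only on d and γ such that for all m ∈ ℝ^d and σ > 0: |∂_{m_i} F(m,σ)| ≤ C_{d,γ} ‖f‖_{C^γ} σ^{γ − 1} for each i = 1,…,d, and |∂_σ F(m,σ)| ≤ C_{d,γ} ‖f‖_{C^γ} σ^{γ − 1}. -/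
open MeasureTheory

/-- The standard Gaussian measure on `ℝ^d` (as `EuclideanSpace ℝ (Fin d)`), with density
`(2π)^{−d/2} e^{−‖x‖²/2}` with respect to Lebesgue measure. -/
noncomputable def stdGaussian (d : ℕ) : Measure (EuclideanSpace ℝ (Fin d)) :=
  volume.withDensity fun x =>
    ENNReal.ofReal ((2 * Real.pi) ^ (-(d : ℝ) / 2) * Real.exp (-‖x‖ ^ 2 / 2))

open Filter Metric Module
open scoped Topology

/-! By the change of variables `y = m + σx`, the smoothing of `f` is the integral of `f` against the
density of `N(m, σ²)`, so that `m` and `σ` occur only in a smooth kernel. Differentiating the kernel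
gives `DF(m,σ) = σ⁻¹ 𝔼[f(m + σX) S(X)]`, where `X` is standard Gaussian and the score
`S(x)(h, s) = ⟨x, h⟩ + s (‖x‖² - d)` has mean zero. Hence `f(m + σX)` may be replaced by
`f(m + σX) - f(m)`, which is at most `K σ^γ ‖X‖^γ`. -/

section Holder

variable {X E : Type*} [SeminormedAddCommGroup X] [SeminormedAddCommGroup E]
  {f : X → E} {K γ : ℝ}

lemma continuous_of_norm_sub_le_mul_rpow (hγ : 0 < γ)
    (hf : ∀ x y, ‖f x - f y‖ ≤ K * ‖x - y‖ ^ γ) : Continuous f := by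
  refine continuous_iff_continuousAt.2 fun x => tendsto_iff_norm_sub_tendsto_zero.2 ?_
  have hcont : Continuous fun y => K * ‖y - x‖ ^ γ :=
    continuous_const.mul ((by fun_prop : Continuous fun y => ‖y - x‖).rpow_const
      fun _ => Or.inr hγ.le)
  exact squeeze_zero (fun _ => norm_nonneg _) (fun y => hf y x)
    (by simpa [Real.zero_rpow hγ.ne'] using hcont.tendsto x)

lemma rpow_norm_le_one_add_norm_pow_ceil (hγ : 0 ≤ γ) (x : X) :
    ‖x‖ ^ γ ≤ (1 + ‖x‖) ^ ⌈γ⌉₊ :=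
  calc ‖x‖ ^ γ ≤ (1 + ‖x‖) ^ γ := by gcongr; linarith
    _ ≤ (1 + ‖x‖) ^ (⌈γ⌉₊ : ℝ) :=
      Real.rpow_le_rpow_of_exponent_le (by linarith [norm_nonneg x]) (Nat.le_ceil γ)
    _ = (1 + ‖x‖) ^ ⌈γ⌉₊ := Real.rpow_natCast _ _

lemma norm_le_mul_one_add_norm_pow_of_norm_sub_le (hγ : 0 ≤ γ)
    (hf : ∀ x y, ‖f x - f y‖ ≤ K * ‖x - y‖ ^ γ) (x : X) :
    ‖f x‖ ≤ (‖f 0‖ + |K|) * (1 + ‖x‖) ^ ⌈γ⌉₊ := by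
  have hone : 1 ≤ (1 + ‖x‖) ^ ⌈γ⌉₊ := one_le_pow₀ (by linarith [norm_nonneg x])
  calc ‖f x‖ ≤ ‖f 0‖ + ‖f x - f 0‖ := norm_le_norm_add_norm_sub' _ _
    _ ≤ ‖f 0‖ + |K| * ‖x‖ ^ γ := by
      gcongr
      exact (hf x 0).trans (by rw [sub_zero]; gcongr; exact le_abs_self K)
    _ ≤ ‖f 0‖ * (1 + ‖x‖) ^ ⌈γ⌉₊ + |K| * (1 + ‖x‖) ^ ⌈γ⌉₊ :=
      add_le_add (le_mul_of_one_le_right (norm_nonneg _) hone)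
        (mul_le_mul_of_nonneg_left (rpow_norm_le_one_add_norm_pow_ceil hγ x) (abs_nonneg K))
    _ = (‖f 0‖ + |K|) * (1 + ‖x‖) ^ ⌈γ⌉₊ := by ring

lemma norm_comp_affine_le_mul_one_add_norm_pow [NormedSpace ℝ X] {A : ℝ} {k : ℕ}
    (hf : ∀ x, ‖f x‖ ≤ A * (1 + ‖x‖) ^ k) (m : X) (σ : ℝ) (x : X) :
    ‖f (m + σ • x)‖ ≤ A * (1 + ‖m‖ + |σ|) ^ k * (1 + ‖x‖) ^ k := by
  have hA : 0 ≤ A := nonneg_of_mul_nonneg_left ((norm_nonneg _).trans (hf 0)) (by positivity)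
  have haffine : 1 + ‖m + σ • x‖ ≤ (1 + ‖m‖ + |σ|) * (1 + ‖x‖) := by
    have htriangle : ‖m + σ • x‖ ≤ ‖m‖ + |σ| * ‖x‖ :=
      (norm_add_le _ _).trans_eq (by rw [norm_smul, Real.norm_eq_abs])
    nlinarith [norm_nonneg m, norm_nonneg x, abs_nonneg σ, mul_nonneg (norm_nonneg m)
      (norm_nonneg x)]
  calc ‖f (m + σ • x)‖ ≤ A * (1 + ‖m + σ • x‖) ^ k := hf _
    _ ≤ A * ((1 + ‖m‖ + |σ|) * (1 + ‖x‖)) ^ k := by gcongr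
    _ = A * (1 + ‖m‖ + |σ|) ^ k * (1 + ‖x‖) ^ k := by rw [mul_pow, mul_assoc]

end Holder

section Ball

variable {V : Type*} [SeminormedAddCommGroup V] {p : V × ℝ}

lemma bounds_of_mem_ball_zero_one (hp : p ∈ ball ((0, 1) : V × ℝ) (1 / 2)) :
    ‖p.1‖ < 1 / 2 ∧ 1 / 2 < p.2 ∧ p.2 < 3 / 2 := by
  rw [mem_ball, Prod.dist_eq, max_lt_iff, dist_zero_right, Real.dist_eq, abs_lt] at hp
  exact ⟨hp.1, by linarith [hp.2.1], by linarith [hp.2.2]⟩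

lemma inv_snd_le_two_of_mem_ball (hp : p ∈ ball ((0, 1) : V × ℝ) (1 / 2)) :
    p.2⁻¹ ≤ 2 := by
  obtain ⟨-, hlower, -⟩ := bounds_of_mem_ball_zero_one hp
  exact inv_le_of_inv_le₀ two_pos (by linarith)

end Ball

section Kernel

-- Lets instance search find the normed space structure on `V × ℝ →L[ℝ] E`.
set_option maxSynthPendingDepth 3

variable {V : Type*} [NormedAddCommGroup V] [InnerProductSpace ℝ V]

/-- The density `(2π)^{-n/2} e^{-‖x‖²/2}` of the standard Gaussian measure on an `n`-dimensional
space. -/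
noncomputable def gaussianDensity (x : V) : ℝ :=
  (2 * Real.pi) ^ (-(finrank ℝ V : ℝ) / 2) * Real.exp (-‖x‖ ^ 2 / 2)

/-- The density of the Gaussian measure with mean `p.1` and standard deviation `p.2`, which form a
single argument so that the kernel can be differentiated in both. -/
noncomputable def gaussianKernel (p : V × ℝ) (y : V) : ℝ :=
  p.2⁻¹ ^ finrank ℝ V * gaussianDensity (p.2⁻¹ • (y - p.1))

/-- The score of the Gaussian location-scale family: the derivative of `log (gaussianKernel p z)` in
the mean and the standard deviation at `p = (0, 1)`. -/
noncomputable def gaussianScore (z : V) : V × ℝ →L[ℝ] ℝ :=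
  (innerSL ℝ z).comp (ContinuousLinearMap.fst ℝ V ℝ) +
    (‖z‖ ^ 2 - finrank ℝ V) • ContinuousLinearMap.snd ℝ V ℝ

lemma gaussianDensity_nonneg (x : V) : 0 ≤ gaussianDensity x := by
  unfold gaussianDensity; positivity

lemma continuous_gaussianDensity : Continuous (gaussianDensity (V := V)) := by
  unfold gaussianDensity; fun_prop

lemma continuous_gaussianKernel (p : V × ℝ) : Continuous (gaussianKernel p) := by
  unfold gaussianKernel gaussianDensity; fun_prop

lemma continuous_gaussianScore : Continuous (gaussianScore (V := V)) := by
  unfold gaussianScore; fun_prop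

lemma continuous_gaussianScore_smulRight {E : Type*} [NormedAddCommGroup E] [NormedSpace ℝ E]
    {g : V → E} (hg : Continuous g) : Continuous fun y => (gaussianScore y).smulRight (g y) :=
  (ContinuousLinearMap.smulRightL ℝ (V × ℝ) E).continuous₂.comp
    (continuous_gaussianScore.prodMk hg)

lemma gaussianKernel_zero_one (y : V) : gaussianKernel (0, 1) y = gaussianDensity y := by
  simp [gaussianKernel]

lemma hasFDerivAt_gaussianDensity (x : V) :
    HasFDerivAt gaussianDensity (-gaussianDensity x • innerSL ℝ x) x := by
  have hexponent : HasFDerivAt (fun x : V => -‖x‖ ^ 2 / 2) (-innerSL ℝ x) x := by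
    refine ((hasFDerivAt_id x).norm_sq.neg.mul_const (2⁻¹ : ℝ)).congr_fderiv ?_
    ext v
    simp
  refine (hexponent.exp.const_mul _).congr_fderiv ?_
  ext v
  simp [gaussianDensity]
  ring

lemma hasFDerivAt_gaussianKernel {p : V × ℝ} (hp : p.2 ≠ 0) (y : V) :
    HasFDerivAt (fun q => gaussianKernel q y)
      ((gaussianKernel p y * p.2⁻¹) • gaussianScore (p.2⁻¹ • (y - p.1))) p := by
  have hinv : HasFDerivAt (fun q : V × ℝ => q.2⁻¹)
      (-(p.2 ^ 2)⁻¹ • ContinuousLinearMap.snd ℝ V ℝ) p :=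
    (hasDerivAt_inv hp).comp_hasFDerivAt p hasFDerivAt_snd
  have hrescale := hinv.smul ((hasFDerivAt_fst (p := p)).const_sub y)
  have hdensity := (hasFDerivAt_gaussianDensity _).comp p hrescale
  refine ((hinv.pow (finrank ℝ V)).mul hdensity).congr_fderiv ?_
  -- Differentiating the power produces the exponent `finrank ℝ V - 1`, truncated in dimension zero.
  rcases hn : finrank ℝ V with _ | n <;> ext v <;>
    simp [gaussianKernel, gaussianScore, hn, norm_smul, inner_smul_right, mul_pow, -map_sub] <;>
    ring

lemma norm_gaussianScore_le (z : V) :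
    ‖gaussianScore z‖ ≤ (finrank ℝ V + 1) * (1 + ‖z‖) ^ 2 := by
  have hfst : ‖(innerSL ℝ z).comp (ContinuousLinearMap.fst ℝ V ℝ)‖ ≤ ‖z‖ * 1 := by
    refine (ContinuousLinearMap.opNorm_comp_le _ _).trans ?_
    rw [innerSL_apply_norm]
    gcongr
    exact ContinuousLinearMap.norm_fst_le ..
  have hsnd : ‖(‖z‖ ^ 2 - (finrank ℝ V : ℝ)) • ContinuousLinearMap.snd ℝ V ℝ‖ ≤
      (‖z‖ ^ 2 + finrank ℝ V) * 1 := by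
    rw [norm_smul]
    gcongr
    · exact (norm_sub_le _ _).trans_eq (by simp)
    · exact ContinuousLinearMap.norm_snd_le ..
  refine (norm_add_le_of_le hfst hsnd).trans ?_
  nlinarith [norm_nonneg z, mul_nonneg (Nat.cast_nonneg (α := ℝ) (finrank ℝ V))
    (mul_nonneg (norm_nonneg z) (add_nonneg zero_le_two (norm_nonneg z)))]

lemma one_add_norm_rescale_le {p : V × ℝ} (hp : p ∈ ball ((0, 1) : V × ℝ) (1 / 2)) (y : V) :
    1 + ‖p.2⁻¹ • (y - p.1)‖ ≤ 2 * (1 + ‖y‖) := by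
  obtain ⟨hmean, hlower, -⟩ := bounds_of_mem_ball_zero_one hp
  have hinv : 0 < p.2⁻¹ := inv_pos.2 (by linarith)
  rw [norm_smul, Real.norm_of_nonneg hinv.le]
  nlinarith [norm_sub_le y p.1, inv_snd_le_two_of_mem_ball hp, norm_nonneg (y - p.1)]

lemma norm_sq_le_norm_rescale_sq {p : V × ℝ} (hp : p ∈ ball ((0, 1) : V × ℝ) (1 / 2)) (y : V) :
    ‖y‖ ^ 2 ≤ 9 / 2 * ‖p.2⁻¹ • (y - p.1)‖ ^ 2 + 1 / 2 := by
  obtain ⟨hmean, hlower, hupper⟩ := bounds_of_mem_ball_zero_one hp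
  set z := p.2⁻¹ • (y - p.1) with hz
  have hy : y = p.2 • z + p.1 := by
    rw [hz, smul_inv_smul₀ (by linarith), sub_add_cancel]
  have hnorm : ‖y‖ ≤ 3 / 2 * ‖z‖ + 1 / 2 := by
    calc ‖y‖ ≤ p.2 * ‖z‖ + ‖p.1‖ := by
          conv_lhs => rw [hy]
          refine (norm_add_le _ _).trans_eq ?_
          rw [norm_smul, Real.norm_of_nonneg (by linarith)]
      _ ≤ 3 / 2 * ‖z‖ + 1 / 2 := by gcongr
  nlinarith [norm_nonneg y, sq_nonneg (3 / 2 * ‖z‖ - 1 / 2)]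

lemma exists_gaussianKernel_le_mul_exp (V : Type*) [NormedAddCommGroup V]
    [InnerProductSpace ℝ V] :
    ∃ B, ∀ p ∈ ball ((0, 1) : V × ℝ) (1 / 2), ∀ y : V,
      |gaussianKernel p y| ≤ B * Real.exp (-(1 / 9) * ‖y‖ ^ 2) := by
  refine ⟨2 ^ finrank ℝ V * ((2 * Real.pi) ^ (-(finrank ℝ V : ℝ) / 2) * Real.exp (1 / 18)),
    fun p hp y => ?_⟩
  have hinv : 0 < p.2⁻¹ := inv_pos.2 (by linarith [(bounds_of_mem_ball_zero_one hp).2.1])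
  rw [gaussianKernel, abs_of_nonneg (mul_nonneg (by positivity) (gaussianDensity_nonneg _)),
    gaussianDensity, mul_assoc, mul_assoc, ← Real.exp_add]
  gcongr
  · exact inv_snd_le_two_of_mem_ball hp
  · linarith [norm_sq_le_norm_rescale_sq hp y]

lemma exists_norm_fderiv_gaussianKernel_le (V : Type*) [NormedAddCommGroup V]
    [InnerProductSpace ℝ V] :
    ∃ B, ∀ p ∈ ball ((0, 1) : V × ℝ) (1 / 2), ∀ y : V,
      ‖(gaussianKernel p y * p.2⁻¹) • gaussianScore (p.2⁻¹ • (y - p.1))‖ ≤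
        B * ((1 + ‖y‖) ^ 2 * Real.exp (-(1 / 9) * ‖y‖ ^ 2)) := by
  obtain ⟨B, hB⟩ := exists_gaussianKernel_le_mul_exp V
  refine ⟨B * 2 * ((finrank ℝ V + 1) * 2 ^ 2), fun p hp y => ?_⟩
  have hinv : 0 < p.2⁻¹ := inv_pos.2 (by linarith [(bounds_of_mem_ball_zero_one hp).2.1])
  have hscore : ‖gaussianScore (p.2⁻¹ • (y - p.1))‖ ≤
      (finrank ℝ V + 1) * (2 * (1 + ‖y‖)) ^ 2 := by
    refine (norm_gaussianScore_le _).trans ?_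
    gcongr
    exact one_add_norm_rescale_le hp y
  rw [norm_smul, norm_mul, Real.norm_eq_abs, Real.norm_of_nonneg hinv.le]
  calc |gaussianKernel p y| * p.2⁻¹ * ‖gaussianScore (p.2⁻¹ • (y - p.1))‖
      ≤ B * Real.exp (-(1 / 9) * ‖y‖ ^ 2) * 2 * ((finrank ℝ V + 1) * (2 * (1 + ‖y‖)) ^ 2) := by
        have hkernel := hB p hp y
        have hnonneg := (abs_nonneg _).trans hkernel
        gcongr
        exact inv_snd_le_two_of_mem_ball hp
    _ = B * 2 * ((finrank ℝ V + 1) * 2 ^ 2) *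
          ((1 + ‖y‖) ^ 2 * Real.exp (-(1 / 9) * ‖y‖ ^ 2)) := by ring

end Kernel

lemma one_add_pow_mul_exp_neg_mul_sq_le (k : ℕ) {b t : ℝ} (hb : 0 < b) (ht : 0 ≤ t) :
    (1 + t) ^ k * Real.exp (-b * t ^ 2) ≤
      k.factorial * Real.exp (1 + 1 / (2 * b)) * Real.exp (-(b / 2) * t ^ 2) := by
  have hpow : (1 + t) ^ k ≤ k.factorial * Real.exp (1 + t) := by
    have h := Real.pow_div_factorial_le_exp (1 + t) (by linarith) k
    rwa [div_le_iff₀' (by positivity)] at h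
  have hexponent : 1 + t + -b * t ^ 2 ≤ 1 + 1 / (2 * b) + -(b / 2) * t ^ 2 := by
    have hsq : 1 / (2 * b) + b / 2 * t ^ 2 - t = (b * t - 1) ^ 2 / (2 * b) := by
      field_simp
      ring
    have hnonneg : 0 ≤ (b * t - 1) ^ 2 / (2 * b) := by positivity
    linarith
  calc (1 + t) ^ k * Real.exp (-b * t ^ 2)
      ≤ k.factorial * Real.exp (1 + t) * Real.exp (-b * t ^ 2) := by gcongr
    _ = k.factorial * Real.exp (1 + t + -b * t ^ 2) := by rw [Real.exp_add (1 + t)]; ring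
    _ ≤ k.factorial * Real.exp (1 + 1 / (2 * b) + -(b / 2) * t ^ 2) := by gcongr
    _ = k.factorial * Real.exp (1 + 1 / (2 * b)) * Real.exp (-(b / 2) * t ^ 2) := by
      rw [Real.exp_add]; ring

section Smoothing

set_option maxSynthPendingDepth 3

variable {V E : Type*} [NormedAddCommGroup V] [InnerProductSpace ℝ V] [FiniteDimensional ℝ V]
  [MeasurableSpace V] [BorelSpace V] [NormedAddCommGroup E]

lemma integrable_exp_neg_mul_norm_sq {b : ℝ} (hb : 0 < b) :
    Integrable fun y : V => Real.exp (-b * ‖y‖ ^ 2) := by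
  have h := (GaussianFourier.integrable_cexp_neg_mul_sq_norm_add (V := V) (b := (b : ℂ))
    (by simpa using hb) 0 0).norm
  simpa [Complex.norm_exp, ← Complex.ofReal_pow, ← Complex.ofReal_mul] using h

lemma integrable_one_add_norm_pow_mul_exp (k : ℕ) {b : ℝ} (hb : 0 < b) :
    Integrable fun y : V => (1 + ‖y‖) ^ k * Real.exp (-b * ‖y‖ ^ 2) := by
  refine ((integrable_exp_neg_mul_norm_sq (half_pos hb)).const_mul
    (k.factorial * Real.exp (1 + 1 / (2 * b)))).mono'
    (Continuous.aestronglyMeasurable (by fun_prop)) (.of_forall fun y => ?_)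
  rw [Real.norm_of_nonneg (by positivity)]
  exact one_add_pow_mul_exp_neg_mul_sq_le k hb (norm_nonneg y)

variable [NormedSpace ℝ E]

/-- The Gaussian smoothing `F(m, σ) = ∫ f(m + σx) dγ(x)`, as a function of the pair `(m, σ)`. The
standard Gaussian measure `γ` enters through its density. -/
noncomputable def gaussianSmoothing (f : V → E) (p : V × ℝ) : E :=
  ∫ x, gaussianDensity x • f (p.1 + p.2 • x)

lemma gaussianSmoothing_eq_integral_gaussianKernel (g : V → E) {p : V × ℝ} (hp : 0 < p.2) :
    gaussianSmoothing g p = ∫ y, gaussianKernel p y • g y := by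
  set G : V → E := fun y => gaussianDensity (p.2⁻¹ • (y - p.1)) • g y with hG
  calc gaussianSmoothing g p = ∫ x, G (p.1 + p.2 • x) := by
        simp only [gaussianSmoothing, hG, add_sub_cancel_left, inv_smul_smul₀ hp.ne']
    _ = |(p.2 ^ finrank ℝ V)⁻¹| • ∫ y, G y := by
        rw [Measure.integral_comp_smul volume (fun z => G (p.1 + z)), integral_add_left_eq_self]
    _ = ∫ y, gaussianKernel p y • g y := by
        rw [abs_of_nonneg (by positivity), ← inv_pow, ← integral_smul]
        simp only [hG, smul_smul, gaussianKernel]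

lemma gaussianSmoothing_comp_affine (f : V → E) (m : V) {σ : ℝ} (hσ : σ ≠ 0) (p : V × ℝ) :
    gaussianSmoothing (fun z => f (m + σ • z)) (σ⁻¹ • (p - (m, 0))) = gaussianSmoothing f p := by
  have haffine (x : V) :
      m + σ • ((σ⁻¹ • (p - (m, 0))).1 + (σ⁻¹ • (p - (m, 0))).2 • x) = p.1 + p.2 • x := by
    simp only [Prod.smul_fst, Prod.smul_snd, Prod.fst_sub, Prod.snd_sub, sub_zero, smul_add,
      smul_assoc, smul_inv_smul₀ hσ]
    abel
  simp only [gaussianSmoothing, haffine]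

section PolynomialGrowth

variable {g : V → E} {A : ℝ} {k : ℕ}

lemma integrable_gaussianDensity_smul (hg : Continuous g)
    (hA : ∀ y, ‖g y‖ ≤ A * (1 + ‖y‖) ^ k) :
    Integrable fun y => gaussianDensity y • g y := by
  refine ((integrable_one_add_norm_pow_mul_exp k one_half_pos).const_mul
    ((2 * Real.pi) ^ (-(finrank ℝ V : ℝ) / 2) * A)).mono'
    (continuous_gaussianDensity.smul hg).aestronglyMeasurable (.of_forall fun y => ?_)
  rw [norm_smul, Real.norm_of_nonneg (gaussianDensity_nonneg y)]
  calc gaussianDensity y * ‖g y‖ ≤ gaussianDensity y * (A * (1 + ‖y‖) ^ k) :=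
        mul_le_mul_of_nonneg_left (hA y) (gaussianDensity_nonneg y)
    _ = (2 * Real.pi) ^ (-(finrank ℝ V : ℝ) / 2) * A *
          ((1 + ‖y‖) ^ k * Real.exp (-(1 / 2) * ‖y‖ ^ 2)) := by
      rw [gaussianDensity, show -‖y‖ ^ 2 / 2 = -(1 / 2) * ‖y‖ ^ 2 by ring]
      ring

lemma integrable_gaussianScore_smulRight (hg : Continuous g)
    (hA : ∀ y, ‖g y‖ ≤ A * (1 + ‖y‖) ^ k) :
    Integrable fun y => gaussianDensity y • (gaussianScore y).smulRight (g y) := by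
  refine integrable_gaussianDensity_smul (A := (finrank ℝ V + 1) * A) (k := k + 2)
    (continuous_gaussianScore_smulRight hg) fun y => ?_
  rw [ContinuousLinearMap.norm_smulRight_apply]
  calc ‖gaussianScore y‖ * ‖g y‖
      ≤ (finrank ℝ V + 1) * (1 + ‖y‖) ^ 2 * (A * (1 + ‖y‖) ^ k) :=
        mul_le_mul (norm_gaussianScore_le y) (hA y) (norm_nonneg _) (by positivity)
    _ = (finrank ℝ V + 1) * A * (1 + ‖y‖) ^ (k + 2) := by ring

lemma hasFDerivAt_gaussianSmoothing_zero_one (hg : Continuous g)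
    (hA : ∀ y, ‖g y‖ ≤ A * (1 + ‖y‖) ^ k) :
    HasFDerivAt (gaussianSmoothing g)
      (∫ y, gaussianDensity y • (gaussianScore y).smulRight (g y)) (0, 1) := by
  obtain ⟨B, hB⟩ := exists_norm_fderiv_gaussianKernel_le V
  have hball : ball ((0, 1) : V × ℝ) (1 / 2) ∈ 𝓝 (0, 1) := ball_mem_nhds _ one_half_pos
  have hpos {p : V × ℝ} (hp : p ∈ ball ((0, 1) : V × ℝ) (1 / 2)) : 0 < p.2 := by
    linarith [(bounds_of_mem_ball_zero_one hp).2.1]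
  set F' : V × ℝ → V → V × ℝ →L[ℝ] E := fun p y =>
    ((gaussianKernel p y * p.2⁻¹) • gaussianScore (p.2⁻¹ • (y - p.1))).smulRight (g y) with hF'
  have hF'_zero_one : F' (0, 1) =
      fun y => gaussianDensity y • (gaussianScore y).smulRight (g y) := by
    funext y
    ext <;> simp [hF', gaussianKernel_zero_one, mul_smul]
  have hF'_norm (y : V) (p : V × ℝ) (hp : p ∈ ball ((0, 1) : V × ℝ) (1 / 2)) :
      ‖F' p y‖ ≤ B * A * ((1 + ‖y‖) ^ (k + 2) * Real.exp (-(1 / 9) * ‖y‖ ^ 2)) := by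
    rw [ContinuousLinearMap.norm_smulRight_apply]
    refine (mul_le_mul (hB p hp y) (hA y) (norm_nonneg _)
      ((norm_nonneg _).trans (hB p hp y))).trans_eq ?_
    ring
  rw [← hF'_zero_one]
  refine (hasFDerivAt_integral_of_dominated_of_fderiv_le (F := fun p y => gaussianKernel p y • g y)
    hball (.of_forall fun p => ((continuous_gaussianKernel p).smul hg).aestronglyMeasurable)
    (by simpa only [gaussianKernel_zero_one] using integrable_gaussianDensity_smul hg hA)
    (by
      rw [hF'_zero_one]
      exact (integrable_gaussianScore_smulRight hg hA).aestronglyMeasurable)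
    (.of_forall hF'_norm)
    ((integrable_one_add_norm_pow_mul_exp (k + 2) (by norm_num)).const_mul _)
    (.of_forall fun y p hp =>
      (hasFDerivAt_gaussianKernel (hpos hp).ne' y).smul_const (g y))).congr_of_eventuallyEq ?_
  filter_upwards [hball] with p hp
  exact gaussianSmoothing_eq_integral_gaussianKernel g (hpos hp)

lemma hasFDerivAt_gaussianSmoothing (hg : Continuous g)
    (hA : ∀ y, ‖g y‖ ≤ A * (1 + ‖y‖) ^ k) (m : V) {σ : ℝ} (hσ : σ ≠ 0) :
    HasFDerivAt (gaussianSmoothing g)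
      (σ⁻¹ • ∫ x, gaussianDensity x • (gaussianScore x).smulRight (g (m + σ • x))) (m, σ) := by
  have hrescale : HasFDerivAt (fun p : V × ℝ => σ⁻¹ • (p - (m, 0)))
      (σ⁻¹ • ContinuousLinearMap.id ℝ (V × ℝ)) (m, σ) :=
    ((hasFDerivAt_id (m, σ)).sub_const (m, (0 : ℝ))).const_smul σ⁻¹
  have hbase : σ⁻¹ • ((m, σ) - (m, 0)) = ((0, 1) : V × ℝ) := by simp [hσ]
  have hunit := hasFDerivAt_gaussianSmoothing_zero_one (g := fun z => g (m + σ • z))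
    (by fun_prop) (norm_comp_affine_le_mul_one_add_norm_pow hA m σ)
  rw [← hbase] at hunit
  have hcomp := hunit.comp (m, σ) hrescale
  rw [ContinuousLinearMap.comp_smul, ContinuousLinearMap.comp_id] at hcomp
  exact hcomp.congr_of_eventuallyEq
    (.of_forall fun p => (gaussianSmoothing_comp_affine g m hσ p).symm)

end PolynomialGrowth

-- The smoothing of a constant function is constant, so its derivative vanishes.
lemma integral_gaussianScore_smulRight_const (e : E) :
    ∫ x : V, gaussianDensity x • (gaussianScore x).smulRight e = 0 := by
  have hderiv := hasFDerivAt_gaussianSmoothing_zero_one (V := V) (g := fun _ => e) (A := ‖e‖)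
    (k := 0) continuous_const fun _ => by simp
  exact hderiv.unique (hasFDerivAt_const (∫ x : V, gaussianDensity x • e) _)

lemma integral_gaussianScore_smulRight_sub_const {g : V → E} {A : ℝ} {k : ℕ} (hg : Continuous g)
    (hA : ∀ y, ‖g y‖ ≤ A * (1 + ‖y‖) ^ k) (e : E) :
    ∫ x, gaussianDensity x • (gaussianScore x).smulRight (g x - e) =
      ∫ x, gaussianDensity x • (gaussianScore x).smulRight (g x) := by
  have hconst : Integrable fun x : V => gaussianDensity x • (gaussianScore x).smulRight e :=
    integrable_gaussianScore_smulRight (A := ‖e‖) (k := 0) continuous_const fun _ => by simp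
  have hsub (x : V) : gaussianDensity x • (gaussianScore x).smulRight (g x - e) =
      gaussianDensity x • (gaussianScore x).smulRight (g x) -
        gaussianDensity x • (gaussianScore x).smulRight e := by
    ext v <;> simp [smul_sub]
  simp_rw [hsub]
  rw [integral_sub (integrable_gaussianScore_smulRight hg hA) hconst,
    integral_gaussianScore_smulRight_const, sub_zero]

/-- The moment `𝔼[‖S(X)‖ ‖X‖^γ]` of a standard Gaussian vector `X` in `V` and its score `S(X)`: the
constant in the derivative bounds for the smoothing of a `γ`-Hölder function. -/
noncomputable def gaussianHolderConst (V : Type*) [NormedAddCommGroup V] [InnerProductSpace ℝ V]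
    [FiniteDimensional ℝ V] [MeasurableSpace V] [BorelSpace V] (γ : ℝ) : ℝ :=
  ∫ x : V, gaussianDensity x * (‖gaussianScore x‖ * ‖x‖ ^ γ)

lemma gaussianHolderConst_nonneg (γ : ℝ) : 0 ≤ gaussianHolderConst V γ :=
  integral_nonneg fun x => mul_nonneg (gaussianDensity_nonneg x) (by positivity)

lemma integrable_gaussianScore_mul_rpow {γ : ℝ} (hγ : 0 ≤ γ) :
    Integrable fun x : V => gaussianDensity x * (‖gaussianScore x‖ * ‖x‖ ^ γ) := by
  have hcont : Continuous fun x : V => ‖x‖ ^ γ := continuous_norm.rpow_const fun _ => Or.inr hγ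
  refine (integrable_gaussianScore_smulRight (A := 1) (k := ⌈γ⌉₊) hcont fun x => ?_).norm.congr
    (.of_forall fun x => ?_)
  · rw [one_mul, Real.norm_of_nonneg (by positivity)]
    exact rpow_norm_le_one_add_norm_pow_ceil hγ x
  · simp only [norm_smul, ContinuousLinearMap.norm_smulRight_apply,
      Real.norm_of_nonneg (gaussianDensity_nonneg x),
      Real.norm_of_nonneg (Real.rpow_nonneg (norm_nonneg x) γ)]

lemma norm_integral_gaussianScore_smulRight_le {g : V → E} {K γ : ℝ} (hγ : 0 ≤ γ)
    (hg : ∀ x, ‖g x‖ ≤ K * ‖x‖ ^ γ) :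
    ‖∫ x, gaussianDensity x • (gaussianScore x).smulRight (g x)‖ ≤
      K * gaussianHolderConst V γ := by
  rw [gaussianHolderConst, ← integral_const_mul]
  refine norm_integral_le_of_norm_le ((integrable_gaussianScore_mul_rpow hγ).const_mul K)
    (.of_forall fun x => ?_)
  rw [norm_smul, ContinuousLinearMap.norm_smulRight_apply,
    Real.norm_of_nonneg (gaussianDensity_nonneg x)]
  calc gaussianDensity x * (‖gaussianScore x‖ * ‖g x‖)
      ≤ gaussianDensity x * (‖gaussianScore x‖ * (K * ‖x‖ ^ γ)) :=
        mul_le_mul_of_nonneg_left (mul_le_mul_of_nonneg_left (hg x) (norm_nonneg _))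
          (gaussianDensity_nonneg x)
    _ = K * (gaussianDensity x * (‖gaussianScore x‖ * ‖x‖ ^ γ)) := by ring

theorem exists_hasFDerivAt_gaussianSmoothing_of_holder {f : V → E} {K γ : ℝ} (hγ : 0 < γ)
    (hf : ∀ x y, ‖f x - f y‖ ≤ K * ‖x - y‖ ^ γ) (m : V) {σ : ℝ} (hσ : 0 < σ) :
    ∃ F' : V × ℝ →L[ℝ] E, HasFDerivAt (gaussianSmoothing f) F' (m, σ) ∧
      ‖F'‖ ≤ gaussianHolderConst V γ * K * σ ^ (γ - 1) := by
  have hcont := continuous_of_norm_sub_le_mul_rpow hγ hf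
  have hgrowth := norm_le_mul_one_add_norm_pow_of_norm_sub_le hγ.le hf
  refine ⟨_, hasFDerivAt_gaussianSmoothing hcont hgrowth m hσ.ne', ?_⟩
  have hincrement (x : V) : ‖f (m + σ • x) - f m‖ ≤ K * σ ^ γ * ‖x‖ ^ γ := by
    refine (hf _ _).trans_eq ?_
    rw [add_sub_cancel_left, norm_smul, Real.norm_of_nonneg hσ.le,
      Real.mul_rpow hσ.le (norm_nonneg x), mul_assoc]
  rw [norm_smul, Real.norm_of_nonneg (inv_nonneg.2 hσ.le),
    ← integral_gaussianScore_smulRight_sub_const (g := fun x => f (m + σ • x)) (by fun_prop)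
      (norm_comp_affine_le_mul_one_add_norm_pow hgrowth m σ) (f m)]
  calc σ⁻¹ * ‖∫ x, gaussianDensity x • (gaussianScore x).smulRight (f (m + σ • x) - f m)‖
      ≤ σ⁻¹ * (K * σ ^ γ * gaussianHolderConst V γ) := by
        gcongr
        exact norm_integral_gaussianScore_smulRight_le hγ.le hincrement
    _ = gaussianHolderConst V γ * K * σ ^ (γ - 1) := by
        rw [Real.rpow_sub_one hσ.ne']
        ring

end Smoothing

lemma integral_stdGaussian {E : Type*} [NormedAddCommGroup E] [NormedSpace ℝ E] (d : ℕ)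
    (g : EuclideanSpace ℝ (Fin d) → E) :
    ∫ x, g x ∂(stdGaussian d) = ∫ x, gaussianDensity x • g x := by
  rw [stdGaussian, integral_withDensity_eq_integral_toReal_smul (by fun_prop)
    (.of_forall fun _ => ENNReal.ofReal_lt_top)]
  refine integral_congr_ae (.of_forall fun x => ?_)
  have hdensity : gaussianDensity x =
      (2 * Real.pi) ^ (-(d : ℝ) / 2) * Real.exp (-‖x‖ ^ 2 / 2) := by
    rw [gaussianDensity, finrank_euclideanSpace_fin]
  simp only [← hdensity, ENNReal.toReal_ofReal (gaussianDensity_nonneg x)]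

theorem gaussian_smoothing_deriv_bounds_holder_general
    (d : ℕ) {γ : ℝ} (hγ : 0 < γ) {E : Type*} [NormedAddCommGroup E] [NormedSpace ℝ E]
    [CompleteSpace E] {f : EuclideanSpace ℝ (Fin d) → E} {K : ℝ}
    (hf : ∀ x y, ‖f x - f y‖ ≤ K * ‖x - y‖ ^ γ)
    (m : EuclideanSpace ℝ (Fin d)) {σ : ℝ} (hσ : 0 < σ) :
    DifferentiableAt ℝ
      (fun p : EuclideanSpace ℝ (Fin d) × ℝ => ∫ x, f (p.1 + p.2 • x) ∂(stdGaussian d)) (m, σ) ∧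
    ‖fderiv ℝ
      (fun p : EuclideanSpace ℝ (Fin d) × ℝ => ∫ x, f (p.1 + p.2 • x) ∂(stdGaussian d)) (m, σ)‖ ≤
        gaussianHolderConst (EuclideanSpace ℝ (Fin d)) γ * K * σ ^ (γ - 1) := by
  obtain ⟨F', hderiv, hnorm⟩ := exists_hasFDerivAt_gaussianSmoothing_of_holder hγ hf m hσ
  simp only [integral_stdGaussian]
  exact ⟨hderiv.differentiableAt, hderiv.fderiv.symm ▸ hnorm⟩

/-- **Improved derivative bounds for the Gaussian smoothing of a Hölder function** (used in
the proof of Proposition 3.3). For `γ ∈ (0,1)`, `f : ℝ^d → ℝ^d` `γ`-Hölder and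
`F(m,σ) = ∫ f(m + σx) dγ_d(x)`, one has
`|∂_{m_i} F| ≤ C_{d,γ} ‖f‖_{C^γ} σ^{γ−1}` and `|∂_σ F| ≤ C_{d,γ} ‖f‖_{C^γ} σ^{γ−1}` with
`C_{d,γ}` depending only on `d, γ`. The `C^γ` norm is encoded by any bound `Kf` with
`∀ x, ‖f x‖ ≤ Kf` and `∀ x y, ‖f x − f y‖ ≤ Kf ‖x − y‖^γ`. -/
theorem gaussian_smoothing_deriv_bounds_holder
    (d : ℕ) (γ : ℝ) (hγ0 : 0 < γ) (hγ1 : γ < 1) :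
    ∃ C : ℝ, 0 ≤ C ∧
    ∀ f : EuclideanSpace ℝ (Fin d) → EuclideanSpace ℝ (Fin d),
    ∀ Kf : ℝ, (∀ x, ‖f x‖ ≤ Kf) → (∀ x y, ‖f x - f y‖ ≤ Kf * ‖x - y‖ ^ γ) →
    ∀ (m : EuclideanSpace ℝ (Fin d)) (σ : ℝ), 0 < σ →
      DifferentiableAt ℝ
        (fun p : EuclideanSpace ℝ (Fin d) × ℝ =>
          ∫ x, f (p.1 + p.2 • x) ∂(stdGaussian d)) (m, σ) ∧
      (∀ i : Fin d,
        ‖fderiv ℝ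
            (fun p : EuclideanSpace ℝ (Fin d) × ℝ =>
              ∫ x, f (p.1 + p.2 • x) ∂(stdGaussian d)) (m, σ)
            (EuclideanSpace.single i 1, 0)‖ ≤ C * Kf * σ ^ (γ - 1)) ∧
      ‖fderiv ℝ
          (fun p : EuclideanSpace ℝ (Fin d) × ℝ =>
            ∫ x, f (p.1 + p.2 • x) ∂(stdGaussian d)) (m, σ)
          (0, 1)‖ ≤ C * Kf * σ ^ (γ - 1) := by
  refine ⟨gaussianHolderConst (EuclideanSpace ℝ (Fin d)) γ, gaussianHolderConst_nonneg γ,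
    fun f Kf _ hf m σ hσ => ?_⟩
  obtain ⟨hdiff, hnorm⟩ := gaussian_smoothing_deriv_bounds_holder_general d hγ0 hf m hσ
  exact ⟨hdiff,
    fun i => (ContinuousLinearMap.unit_le_opNorm _ _ (by simp [Prod.norm_def])).trans hnorm,
    (ContinuousLinearMap.unit_le_opNorm _ _ (by simp [Prod.norm_def])).trans hnorm⟩
end
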